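/- The axial boost field u_*(s) := −a·sinh(2s)/B(s) satisfies the self-adjoint mode-zero Jacobi equation (B·u_*')'(s) + B(s)·(|II|²(s) − 2)·u_*(s) = 0 for all s ∈ ℝ, where |II|²(s) := 2·(B''(s)/B(s) − 1); and if s₀ > 0 satisfies the free boundary condition tanh(φ(s₀)) = B(s₀)·K/(a·sinh(2s₀)), then with r := arcosh(A(s₀)·cosh(φ(s₀))) its Robin defect equals u_*'(s₀) − coth(r)·u_*(s₀) = (B(s₀)² − 2·K²)/B(s₀)³. -/

import Mathlib

namespace MoriCatenoid

/-- Profile function `B(s) = √(a·cosh(2s) − 1/2)` of the Mori family. -/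
noncomputable def B (a s : ℝ) : ℝ := Real.sqrt (a * Real.cosh (2 * s) - 1 / 2)

/-- Profile function `A(s) = √(a·cosh(2s) + 1/2)` of the Mori family. -/
noncomputable def A (a s : ℝ) : ℝ := Real.sqrt (a * Real.cosh (2 * s) + 1 / 2)

/-- The constant `K = √(a² − 1/4)`. -/
noncomputable def K (a : ℝ) : ℝ := Real.sqrt (a ^ 2 - 1 / 4)

/-- The angle function `φ(s) = K·∫₀ˢ dt/(A(t)²·B(t))`. -/
noncomputable def φ (a s : ℝ) : ℝ := K a * ∫ t in (0:ℝ)..s, 1 / ((A a t) ^ 2 * B a t)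

/-- The mode-one Jacobi field `f_*(s) = d/ds (A(s)·cosh(φ(s)))`. -/
noncomputable def fstar (a s : ℝ) : ℝ := deriv (fun t => A a t * Real.cosh (φ a t)) s

/-- Squared norm of the second fundamental form, `|II|²(s) = 2·(B''(s)/B(s) − 1)`. -/
noncomputable def IIsq (a s : ℝ) : ℝ := 2 * (deriv (deriv (B a)) s / B a s - 1)

/-- The mode-`k` potential `W_k(s) = |II|²(s) − 2 − k²/B(s)²`. -/
noncomputable def W (a : ℝ) (k : ℤ) (s : ℝ) : ℝ := IIsq a s - 2 - (k : ℝ) ^ 2 / (B a s) ^ 2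

/-- Inverse hyperbolic cosine: `arcosh x = log (x + √(x² − 1))`. -/
noncomputable def arcosh (x : ℝ) : ℝ := Real.log (x + Real.sqrt (x ^ 2 - 1))

/-- The axial boost field `u_*(s) = −a·sinh(2s)/B(s)`. -/
noncomputable def ustar (a s : ℝ) : ℝ := -a * Real.sinh (2 * s) / B a s

/-- The radial quadratic form of mode `k`:
`S_k(u) = ∫_{−s₀}^{s₀} (B·u'² − B·W_k·u²) − coth(r)·B(s₀)·(u(s₀)² + u(−s₀)²)`,
where `u'` is the derivative of `u` within `[−s₀, s₀]`. -/
noncomputable def Sk (a s₀ r : ℝ) (k : ℤ) (u : ℝ → ℝ) : ℝ :=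
  (∫ s in (-s₀)..s₀,
      (B a s * (derivWithin u (Set.Icc (-s₀) s₀) s) ^ 2 - B a s * W a k s * u s ^ 2))
    - Real.cosh r / Real.sinh r * B a s₀ * (u s₀ ^ 2 + u (-s₀) ^ 2)

lemma B_sq (a : ℝ) (ha : 1 / 2 < a) (s : ℝ) : B a s ^ 2 = a * Real.cosh (2 * s) - 1 / 2 := by
  have h1 := Real.one_le_cosh (2 * s)
  exact Real.sq_sqrt (by nlinarith)

lemma B_pos (a : ℝ) (ha : 1 / 2 < a) (s : ℝ) : 0 < B a s := by
  have h1 := Real.one_le_cosh (2 * s)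
  exact Real.sqrt_pos.mpr (by nlinarith)

lemma A_sq (a : ℝ) (ha : 1 / 2 < a) (s : ℝ) : A a s ^ 2 = B a s ^ 2 + 1 := by
  have h1 := Real.one_le_cosh (2 * s)
  rw [B_sq a ha, A, Real.sq_sqrt (by nlinarith)]
  ring

lemma K_sq (a : ℝ) (ha : 1 / 2 < a) : K a ^ 2 = a ^ 2 - 1 / 4 :=
  Real.sq_sqrt (by nlinarith)

lemma key (a : ℝ) (ha : 1 / 2 < a) (s : ℝ) :
    (a * Real.sinh (2 * s)) ^ 2 = B a s ^ 4 + B a s ^ 2 - K a ^ 2 := by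
  have h : B a s ^ 4 = (B a s ^ 2) ^ 2 := by ring
  rw [h, B_sq a ha, K_sq a ha, mul_pow, Real.sinh_sq]
  ring

lemma hasDerivAt_B (a : ℝ) (ha : 1 / 2 < a) (s : ℝ) :
    HasDerivAt (B a) (a * Real.sinh (2 * s) / B a s) s := by
  have h2 : HasDerivAt (fun t : ℝ => 2 * t) 2 s := by
    simpa using (hasDerivAt_id s).const_mul 2
  have h := ((h2.cosh.const_mul a).sub_const (1 / 2)).sqrt
    (by have := B_sq a ha s; have := B_pos a ha s; nlinarith)
  have hB := B_pos a ha s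
  refine h.congr_deriv ?_
  change _ / (2 * B a s) = _
  field_simp

lemma deriv_B (a : ℝ) (ha : 1 / 2 < a) :
    deriv (B a) = fun s => a * Real.sinh (2 * s) / B a s :=
  funext fun s => (hasDerivAt_B a ha s).deriv

lemma hasDerivAt_B' (a : ℝ) (ha : 1 / 2 < a) (s : ℝ) :
    HasDerivAt (fun s => a * Real.sinh (2 * s) / B a s) (B a s + K a ^ 2 / B a s ^ 3) s := by
  have h2 : HasDerivAt (fun t : ℝ => 2 * t) 2 s := by
    simpa using (hasDerivAt_id s).const_mul 2
  have hB := B_pos a ha s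
  have h := (h2.sinh.const_mul a).div (hasDerivAt_B a ha s) hB.ne'
  refine h.congr_deriv ?_
  have h1 := key a ha s
  have h3 := B_sq a ha s
  have h4 : a * Real.cosh (2 * s) = B a s ^ 2 + 1 / 2 := by linarith
  field_simp
  linear_combination 2 * B a s ^ 2 * h4 - h1

lemma ustar_eq (a : ℝ) : ustar a = fun s => -(a * Real.sinh (2 * s) / B a s) := by
  funext s
  simp only [ustar]
  ring

lemma deriv_ustar (a : ℝ) (ha : 1 / 2 < a) (s : ℝ) :
    deriv (ustar a) s = -(B a s + K a ^ 2 / B a s ^ 3) := by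
  rw [ustar_eq]
  exact (hasDerivAt_B' a ha s).neg.deriv

lemma IIsq_eq (a : ℝ) (ha : 1 / 2 < a) (s : ℝ) : IIsq a s = 2 * K a ^ 2 / B a s ^ 4 := by
  have hB := B_pos a ha s
  rw [IIsq, deriv_B a ha, (hasDerivAt_B' a ha s).deriv]
  field_simp
  ring

lemma cosh_sinh_arcosh (x : ℝ) (hx : 1 ≤ x) :
    Real.cosh (arcosh x) = x ∧ Real.sinh (arcosh x) = Real.sqrt (x ^ 2 - 1) := by
  have h0 := Real.sqrt_nonneg (x ^ 2 - 1)
  have h1 : Real.sqrt (x ^ 2 - 1) ^ 2 = x ^ 2 - 1 := Real.sq_sqrt (by nlinarith)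
  have hp : 0 < x + Real.sqrt (x ^ 2 - 1) := by linarith
  have hi : (x + Real.sqrt (x ^ 2 - 1))⁻¹ = x - Real.sqrt (x ^ 2 - 1) := by
    refine inv_eq_of_mul_eq_one_right ?_
    linear_combination -h1
  rw [arcosh, Real.cosh_log hp, Real.sinh_log hp, hi]
  constructor <;> ring

/-- The axial boost field `u_*(s) = −a·sinh(2s)/B(s)` satisfies the self-adjoint
mode-zero Jacobi equation `(B·u_*')' + B·(|II|² − 2)·u_* = 0` on `ℝ`, and under
the free boundary condition its Robin defect is
`u_*'(s₀) − coth(r)·u_*(s₀) = (B(s₀)² − 2·K²)/B(s₀)³`. -/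
theorem ustar_jacobi_and_robin_defect (a : ℝ) (ha : 1 / 2 < a) :
    (∀ s : ℝ, deriv (fun t => B a t * deriv (ustar a) t) s
        + B a s * (IIsq a s - 2) * ustar a s = 0) ∧
    (∀ s₀ : ℝ, 0 < s₀ →
      Real.tanh (φ a s₀) = B a s₀ * K a / (a * Real.sinh (2 * s₀)) →
      ∀ r : ℝ, r = arcosh (A a s₀ * Real.cosh (φ a s₀)) →
        deriv (ustar a) s₀ - Real.cosh r / Real.sinh r * ustar a s₀
          = (B a s₀ ^ 2 - 2 * K a ^ 2) / B a s₀ ^ 3) := by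
  constructor
  · intro s
    have hB := B_pos a ha s
    have hd := hasDerivAt_B a ha s
    have e : (fun t => B a t * deriv (ustar a) t)
        = fun t => -(B a t ^ 2 + K a ^ 2 / B a t ^ 2) := by
      funext t
      have hB := B_pos a ha t
      rw [deriv_ustar a ha]
      field_simp
    have h := ((hd.pow 2).add
      ((hasDerivAt_const s (K a ^ 2)).div (hd.pow 2) (by simpa using hB.ne'))).neg
    have h' : deriv (fun t => -(B a t ^ 2 + K a ^ 2 / B a t ^ 2)) s = _ := h.deriv
    rw [e, h', IIsq_eq a ha, ustar_eq]
    simp only [Pi.pow_apply]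
    field_simp
    ring
  · intro s₀ hs hφ r hr
    have hB := B_pos a ha s₀
    have hA := A_sq a ha s₀
    have hS : 0 < Real.sinh (2 * s₀) := Real.sinh_pos_iff.mpr (by linarith)
    have haS : 0 < a * Real.sinh (2 * s₀) := mul_pos (by linarith) hS
    have hk := key a ha s₀
    have hA1 : 1 < A a s₀ := by
      have : 0 ≤ A a s₀ := Real.sqrt_nonneg _
      nlinarith
    have hC := Real.one_le_cosh (φ a s₀)
    have hX : 1 < A a s₀ * Real.cosh (φ a s₀) := by nlinarith
    obtain ⟨h1, h2⟩ := cosh_sinh_arcosh _ hX.le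
    rw [hr, h1, h2, deriv_ustar a ha, ustar_eq]
    beta_reduce
    have hcs := Real.cosh_sq (φ a s₀)
    rw [Real.tanh_eq_sinh_div_cosh, div_eq_div_iff (by positivity) haS.ne'] at hφ
    have hX2 : (A a s₀ * Real.cosh (φ a s₀)) ^ 2
        = (B a s₀ ^ 2 + 1) * Real.cosh (φ a s₀) ^ 2 := by rw [mul_pow, hA]
    generalize A a s₀ * Real.cosh (φ a s₀) = X at *
    have hY0 : 0 < Real.sqrt (X ^ 2 - 1) := Real.sqrt_pos.mpr (by nlinarith)
    have hY : Real.sqrt (X ^ 2 - 1) ^ 2 = X ^ 2 - 1 := Real.sq_sqrt (by nlinarith)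
    generalize Real.sqrt (X ^ 2 - 1) = Y at *
    generalize a * Real.sinh (2 * s₀) = S at *
    generalize Real.cosh (φ a s₀) = C at *
    generalize Real.sinh (φ a s₀) = T at *
    generalize B a s₀ = b at *
    generalize K a = k at *
    have hφ2 : T ^ 2 * S ^ 2 = b ^ 2 * k ^ 2 * C ^ 2 := by
      linear_combination (T * S + b * k * C) * hφ
    have h3 : X ^ 2 * (b ^ 2 - k ^ 2) = S ^ 2 := by
      linear_combination (b ^ 2 - k ^ 2) * hX2 - C ^ 2 * hk + S ^ 2 * hcs + hφ2
    have h4 : X * b ^ 2 = S * Y := by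
      have h5 : (X * b ^ 2) ^ 2 = (S * Y) ^ 2 := by
        linear_combination -h3 - S ^ 2 * hY - X ^ 2 * hk
      exact (pow_left_inj₀ (by positivity) (by positivity) two_ne_zero).mp h5
    have h6 : X / Y = S / b ^ 2 := by
      rw [div_eq_div_iff hY0.ne' (by positivity)]
      exact h4
    rw [h6]
    field_simp
    linear_combination hk

end MoriCatenoid
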